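/- For every function f in the class S, the image f(𝔻) contains the open disk {w ∈ ℂ : |w| < 1/4}. (Koebe's one-quarter theorem, used repeatedly in the paper.) -/

import Mathlib

/-- The class `S` of normalized univalent functions on the unit disk:
holomorphic and injective on `𝔻 = {z : ℂ | |z| < 1}` with `f 0 = 0` and `f' 0 = 1`. -/
def SClass (f : ℂ → ℂ) : Prop :=
  DifferentiableOn ℂ f (Metric.ball (0:ℂ) 1) ∧ Set.InjOn f (Metric.ball (0:ℂ) 1) ∧
    f 0 = 0 ∧ deriv f 0 = 1

/-- The `n`-th Taylor coefficient of `f` at `0`: `aₙ(f) = f⁽ⁿ⁾(0)/n!`. -/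
noncomputable def taylorCoeff (f : ℂ → ℂ) (n : ℕ) : ℂ :=
  iteratedDeriv n f 0 / n.factorial

open Complex MeasureTheory Metric Set

/-- The Jacobian determinant of the real-linear map `w ↦ a w + c conj(w)`. -/
theorem det_smul_add_conj (a c : ℂ) :
    (a • (1 : ℂ →L[ℝ] ℂ) + c • (conjCLE : ℂ →L[ℝ] ℂ)).det = ‖a‖ ^ 2 - ‖c‖ ^ 2 := by
  rw [ContinuousLinearMap.det, ← LinearMap.det_toMatrix basisOneI, Matrix.det_fin_two]
  simp [LinearMap.toMatrix_apply, Complex.sq_norm, Complex.normSq_apply]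
  ring

/-- A nonvanishing holomorphic function on the unit disk has a holomorphic inverse square root. -/
theorem exists_sq_mul_eq_one {G : ℂ → ℂ} (hG : DifferentiableOn ℂ G (ball 0 1))
    (h0 : ∀ z ∈ ball (0 : ℂ) 1, G z ≠ 0) (hG0 : G 0 = 1) :
    ∃ m : ℂ → ℂ, DifferentiableOn ℂ m (ball 0 1) ∧ m 0 = 1 ∧
      ∀ z ∈ ball (0 : ℂ) 1, m z ^ 2 * G z = 1 := by
  have hd : DifferentiableOn ℂ (fun z ↦ -deriv G z / (2 * G z)) (ball 0 1) :=
    (hG.deriv isOpen_ball).neg.div (hG.const_mul 2) fun z hz ↦ by simpa using h0 z hz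
  obtain ⟨L, hL0, hL⟩ := hd.isExactOn_ball.with_val_at 0 0
  have hder : ∀ z ∈ ball (0 : ℂ) 1, HasDerivAt (fun z ↦ exp (L z) ^ 2 * G z) 0 z := by
    intro z hz
    have h1 := (((hL z hz).cexp).pow 2).mul
      ((hG.differentiableAt (isOpen_ball.mem_nhds hz)).hasDerivAt)
    refine h1.congr_deriv ?_
    have := h0 z hz
    simp
    field_simp
    ring
  refine ⟨fun z ↦ exp (L z), fun z hz ↦ ((hL z hz).cexp).differentiableAt.differentiableWithinAt,
    by simp [hL0], fun z hz ↦ ?_⟩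
  have := (convex_ball (0 : ℂ) 1).is_const_of_fderivWithin_eq_zero (𝕜 := ℂ)
    (f := fun z ↦ exp (L z) ^ 2 * G z)
    (fun z hz ↦ (hder z hz).differentiableAt.differentiableWithinAt)
    (fun z hz ↦ by
      rw [fderivWithin_of_isOpen isOpen_ball hz, (hder z hz).hasFDerivAt.fderiv]; simp)
    hz (mem_ball_self one_pos)
  simpa [hL0, hG0] using this

/-- A lower bound for circle averages integrates to a lower bound over an annulus. -/
theorem ofReal_integral_le_lintegral_annulus {u : ℂ → ℝ} {φ : ℝ → ℝ} {ε r : ℝ} (hε : 0 < ε)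
    (hεr : ε ≤ r) (hu : ContinuousOn u {z | ε < ‖z‖ ∧ ‖z‖ < r}) (hu0 : ∀ z, 0 ≤ u z)
    (hφ : ContinuousOn φ (Icc ε r)) (hφ0 : ∀ ρ, 0 ≤ φ ρ)
    (h : ∀ ρ ∈ Ioo ε r, φ ρ ≤ Real.circleAverage u 0 ρ) :
    ENNReal.ofReal (2 * Real.pi * ∫ ρ in ε..r, ρ * φ ρ) ≤
      ∫⁻ z in {z | ε < ‖z‖ ∧ ‖z‖ < r}, ENNReal.ofReal (u z) := by
  set A : Set ℂ := {z | ε < ‖z‖ ∧ ‖z‖ < r} with hA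
  have hAo : IsOpen A := (isOpen_lt continuous_const continuous_norm).inter
    (isOpen_lt continuous_norm continuous_const)
  have hmeas : Measurable (A.indicator fun z ↦ ENNReal.ofReal (u z)) := by
    classical
    rw [← piecewise_eq_indicator]
    exact (ENNReal.continuous_ofReal.comp_continuousOn hu).measurable_piecewise
      continuousOn_const hAo.measurableSet
  rw [← lintegral_indicator hAo.measurableSet, ← Complex.lintegral_comp_polarCoord_symm,
    polarCoord_target, Measure.volume_eq_prod, ← Measure.prod_restrict, lintegral_prod]
  · have hsub : Ioo ε r ⊆ Ioi 0 := fun ρ hρ ↦ hε.trans hρ.1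
    refine le_trans ?_ (lintegral_mono_set hsub)
    have hint : IntegrableOn (fun ρ ↦ 2 * Real.pi * (ρ * φ ρ)) (Ioo ε r) :=
      (ContinuousOn.integrableOn_Icc (by fun_prop)).mono_set Ioo_subset_Icc_self
    rw [← intervalIntegral.integral_const_mul, intervalIntegral.integral_of_le hεr,
      integral_Ioc_eq_integral_Ioo, ofReal_integral_eq_lintegral_ofReal hint]
    · refine setLIntegral_mono' measurableSet_Ioo fun ρ hρ ↦ ?_
      have hρ0 : 0 < ρ := hsub hρ
      have hmem : ∀ θ : ℝ, circleMap 0 ρ θ ∈ A := fun θ ↦ by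
        simpa [hA, abs_of_pos hρ0] using hρ
      have hcont : Continuous fun θ : ℝ ↦ u (circleMap 0 ρ θ) :=
        hu.comp_continuous (continuous_circleMap 0 ρ) hmem
      have havg := h ρ hρ
      rw [Real.circleAverage_eq_integral_add (-Real.pi)] at havg
      rw [intervalIntegral.integral_comp_add_right (fun θ ↦ u (circleMap 0 ρ θ)),
        intervalIntegral.integral_of_le (by linarith [Real.pi_pos]),
        integral_Ioc_eq_integral_Ioo] at havg
      have e1 : (0 : ℝ) + -Real.pi = -Real.pi := by ring
      have e2 : 2 * Real.pi + -Real.pi = Real.pi := by ring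
      rw [e1, e2, smul_eq_mul, inv_mul_eq_div, le_div_iff₀ Real.two_pi_pos] at havg
      have heq : ∀ θ : ℝ, ENNReal.ofReal (ρ, θ).1 •
          A.indicator (fun z ↦ ENNReal.ofReal (u z)) (Complex.polarCoord.symm (ρ, θ)) =
          ENNReal.ofReal (ρ * u (circleMap 0 ρ θ)) := fun θ ↦ by
        have : Complex.polarCoord.symm (ρ, θ) = circleMap 0 ρ θ := by
          simp [circleMap, Complex.polarCoord_symm_apply, exp_mul_I]
        rw [this, indicator_of_mem (hmem θ), smul_eq_mul, ← ENNReal.ofReal_mul hρ0.le]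
      simp_rw [heq]
      rw [← ofReal_integral_eq_lintegral_ofReal, integral_const_mul]
      · refine ENNReal.ofReal_le_ofReal ?_
        nlinarith
      · exact (continuous_const.mul hcont).integrableOn_Icc.mono_set Ioo_subset_Icc_self
      · exact ae_of_all _ fun θ ↦ mul_nonneg hρ0.le (hu0 _)
    · refine (ae_restrict_iff' measurableSet_Ioo).2 (ae_of_all _ fun ρ hρ ↦ ?_)
      exact mul_nonneg Real.two_pi_pos.le (mul_nonneg (hsub hρ).le (hφ0 ρ))
  · refine Measurable.aemeasurable ?_
    refine (ENNReal.measurable_ofReal.comp measurable_fst).smul (hmeas.comp ?_)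
    have := Complex.measurableEquivRealProd.symm.measurable.comp
      (continuous_polarCoord_symm.measurable)
    exact this

/-- A lower bound for the mean square of `g(z) - z⁻²` over a circle. -/
theorem le_circleAverage_normSq {g : ℂ → ℂ} (hg : DifferentiableOn ℂ g (ball 0 1)) {ρ : ℝ}
    (h0 : 0 < ρ) (h1 : ρ < 1) :
    (ρ ^ 4)⁻¹ + ‖g 0‖ ^ 2 ≤ Real.circleAverage (fun z ↦ ‖g z - (z ^ 2)⁻¹‖ ^ 2) 0 ρ := by
  have habs : |ρ| = ρ := abs_of_pos h0
  set ψ : ℂ → ℂ := fun z ↦ 2 * ((starRingEnd ℂ) (g 0) - z ^ 2 * ((ρ ^ 4)⁻¹ : ℝ)) * g z with hψ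
  have hψd : DifferentiableOn ℂ ψ (ball 0 1) := by fun_prop
  have hcl : closedBall (0 : ℂ) |ρ| ⊆ ball 0 1 := closedBall_subset_ball (by rwa [habs])
  have hsp : sphere (0 : ℂ) |ρ| ⊆ ball 0 1 := sphere_subset_closedBall.trans hcl
  have hψi : CircleIntegrable ψ 0 ρ := (hψd.continuousOn.mono hsp).circleIntegrable'
  have hψa : Real.circleAverage ψ 0 ρ = ψ 0 :=
    DiffContOnCl.circleAverage (hψd.mono (closure_ball_subset_closedBall.trans hcl)).diffContOnCl
  have hre := reCLM.circleAverage_comp_comm hψi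
  rw [hψa] at hre
  have hψ0 : (ψ 0).re = 2 * ‖g 0‖ ^ 2 := by
    simp [hψ, Complex.sq_norm, Complex.normSq_apply]; ring
  have hrei : CircleIntegrable (reCLM ∘ ψ) 0 ρ :=
    ((reCLM.continuous.comp_continuousOn hψd.continuousOn).mono hsp).circleIntegrable'
  have hsplit : Real.circleAverage (fun z ↦ ((ρ ^ 4)⁻¹ - ‖g 0‖ ^ 2) + (reCLM ∘ ψ) z) 0 ρ =
      (ρ ^ 4)⁻¹ + ‖g 0‖ ^ 2 := by
    rw [Real.circleAverage_fun_add (circleIntegrable_const _ _ _) hrei, hre,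
      Real.circleAverage_const, reCLM_apply, hψ0]
    ring
  rw [← hsplit]
  refine Real.circleAverage_mono ((circleIntegrable_const _ _ _).add hrei) ?_ fun z hz ↦ ?_
  · refine ContinuousOn.circleIntegrable' ?_
    refine (((hg.continuousOn.mono hsp).sub (ContinuousOn.inv₀ (by fun_prop) ?_)).norm.pow 2)
    intro z hz
    have : z ≠ 0 := by rintro rfl; simp at hz; linarith
    exact pow_ne_zero 2 this
  · have hzn : ‖z‖ = ρ := by simpa [habs] using hz
    have hinv : (z ^ 2)⁻¹ = (starRingEnd ℂ) (z ^ 2) * ((ρ ^ 4)⁻¹ : ℝ) := by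
      rw [inv_def, normSq_eq_norm_sq, norm_pow, hzn]
      congr 2; congr 1; ring
    have hn : ‖(starRingEnd ℂ) (z ^ 2) * ((ρ ^ 4)⁻¹ : ℝ)‖ ^ 2 = (ρ ^ 4)⁻¹ := by
      rw [norm_mul, RCLike.norm_conj, norm_pow, hzn, norm_real, Real.norm_of_nonneg (by positivity)]
      field_simp
    rw [hinv]
    have key : ‖g z - (starRingEnd ℂ) (z ^ 2) * ((ρ ^ 4)⁻¹ : ℝ)‖ ^ 2 -
        (‖(starRingEnd ℂ) (z ^ 2) * ((ρ ^ 4)⁻¹ : ℝ)‖ ^ 2 - ‖g 0‖ ^ 2 + (ψ z).re) =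
        ‖g z - g 0‖ ^ 2 := by
      simp only [hψ]
      generalize z ^ 2 = s
      generalize (ρ ^ 4)⁻¹ = t
      simp [mul_pow, Complex.sq_norm, Complex.normSq_apply]
      ring
    rw [hn] at key
    have := sq_nonneg ‖g z - g 0‖
    simp only [Function.comp_apply, reCLM_apply]
    linarith

/-- The elementary estimate placing the image of an annulus inside an ellipse. -/
theorem annulus_bound {B C D ε ρ : ℝ} (hB : 0 ≤ B) (hC : 0 ≤ C) (hε : 0 < ε)
    (hερ : ε < ρ) (hρ : ρ < 1) (hK : (2 * B + 2 * C) * ε ≤ 1) :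
    ρ⁻¹ + B * (ρ * (1 - ε ^ 2 / ρ ^ 2)) + C * ρ ^ 2 + D * ε ^ 2 ≤ ε⁻¹ + (C + D) * ε ^ 2 := by
  have hρ0 : 0 < ρ := hε.trans hερ
  have h1 : ρ * (1 - ε ^ 2 / ρ ^ 2) ≤ 2 * (ρ - ε) := by
    have : ρ * (1 - ε ^ 2 / ρ ^ 2) = (ρ - ε) * (ρ + ε) / ρ := by field_simp; ring
    rw [this, div_le_iff₀ hρ0]
    nlinarith
  have h2 : ρ ^ 2 ≤ ε ^ 2 + 2 * (ρ - ε) := by nlinarith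
  have h3 : (2 * B + 2 * C) * (ρ - ε) ≤ ε⁻¹ - ρ⁻¹ := by
    have : ε⁻¹ - ρ⁻¹ = (ρ - ε) / (ε * ρ) := by field_simp
    rw [this, le_div_iff₀ (by positivity)]
    have : (2 * B + 2 * C) * (ρ - ε) * (ε * ρ) = (ρ - ε) * (((2 * B + 2 * C) * ε) * ρ) := by ring
    rw [this]
    refine mul_le_of_le_one_right (by linarith) ?_
    exact mul_le_one₀ hK hρ0.le hρ.le
  have := mul_le_mul_of_nonneg_left h1 hB
  have := mul_le_mul_of_nonneg_left h2 hC
  linarith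

/-- Comparison of the area of the image of the annulus `ε < ‖z‖ < r` under the univalent map
`1/z + p` with the area of an ellipse containing it. -/
theorem area_inequality_annulus {p : ℂ → ℂ} (hp : DifferentiableOn ℂ p (ball 0 1))
    (hinj : InjOn (fun z ↦ z⁻¹ + p z) (ball 0 1 \ {0})) {b : ℂ} {C ε r : ℝ} (hb : deriv p 0 = b)
    {q : ℂ → ℂ} (hC : 0 ≤ C) (hpq : ∀ z, p z = z * (b + z * q z))
    (hq : ∀ z ∈ closedBall (0 : ℂ) r, ‖q z‖ ≤ C) (hε : 0 < ε) (hεr : ε < r) (hr : r < 1)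
    (hK : (2 * ‖b‖ + 2 * C) * ε ≤ 1) :
    (1 - (‖b‖ * ε ^ 2) ^ 2) * ((ε ^ 2)⁻¹ - (r ^ 2)⁻¹ + ‖b‖ ^ 2 * (r ^ 2 - ε ^ 2)) ≤
      (ε⁻¹ + (C + ‖b‖ * (‖b‖ + C)) * ε ^ 2) ^ 2 := by
  set B := ‖b‖ with hBdef
  have hB : 0 ≤ B := norm_nonneg b
  set R := ε⁻¹ + (C + B * (B + C)) * ε ^ 2 with hR
  have hR0 : 0 ≤ R := by positivity
  set A : Set ℂ := {z | ε < ‖z‖ ∧ ‖z‖ < r} with hA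
  have hAo : IsOpen A := (isOpen_lt continuous_const continuous_norm).inter
    (isOpen_lt continuous_norm continuous_const)
  have hA0 : ∀ z ∈ A, z ≠ 0 := by rintro z ⟨h1, -⟩ rfl; simp at h1; linarith
  have hAb : A ⊆ ball 0 1 := fun z hz ↦ by simpa using hz.2.trans hr
  set c : ℂ := b * (ε ^ 2 : ℝ) with hc
  have hcn : ‖c‖ = B * ε ^ 2 := by
    rw [hc, norm_mul, norm_real, Real.norm_of_nonneg (by positivity)]
  have hc1 : ‖c‖ < 1 := by rw [hcn]; nlinarith
  set H : ℂ → ℂ := fun z ↦ z⁻¹ + p z with hH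
  set h' : ℂ → ℂ := fun z ↦ deriv p z - (z ^ 2)⁻¹ with hh'
  have hHd : ∀ z ∈ A, HasDerivAt H (h' z) z := fun z hz ↦ by
    have := (hasDerivAt_inv (hA0 z hz)).add
      (hp.differentiableAt (isOpen_ball.mem_nhds (hAb hz))).hasDerivAt
    exact this.congr_deriv (by simp only [hh']; ring)
  set Φ : ℂ → ℂ := fun z ↦ H z - c * (starRingEnd ℂ) (H z) with hΦ
  have hΦd : ∀ z ∈ A, HasFDerivWithinAt Φ (h' z • (1 : ℂ →L[ℝ] ℂ) +
      (-(c * (starRingEnd ℂ) (h' z))) • (conjCLE : ℂ →L[ℝ] ℂ)) A z := fun z hz ↦ by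
    have h1 := (hHd z hz).complexToReal_fderiv
    have h2 := h1.sub (((conjCLE : ℂ →L[ℝ] ℂ).hasFDerivAt.comp z h1).const_smul c)
    refine (h2.congr_fderiv ?_).hasFDerivWithinAt
    ext
    simp
    ring
  have hTinj : ∀ x y : ℂ, x - c * (starRingEnd ℂ) x = y - c * (starRingEnd ℂ) y → x = y := by
    intro x y hxy
    have h1 : x - y = c * (starRingEnd ℂ) (x - y) := by rw [map_sub]; linear_combination hxy
    have h2 : ‖x - y‖ = ‖c‖ * ‖x - y‖ := by
      conv_lhs => rw [h1]
      rw [norm_mul, RCLike.norm_conj]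
    by_contra hne
    have h3 : 0 < ‖x - y‖ := norm_pos_iff.2 (sub_ne_zero.2 hne)
    nlinarith
  have hΦinj : InjOn Φ A := fun x hx y hy hxy ↦
    hinj ⟨hAb hx, hA0 x hx⟩ ⟨hAb hy, hA0 y hy⟩ (hTinj _ _ hxy)
  have himage : Φ '' A ⊆ closedBall 0 R := by
    rintro _ ⟨z, hz, rfl⟩
    have hz0 := hA0 z hz
    set ρ := ‖z‖ with hρ
    have hρ0 : 0 < ρ := norm_pos_iff.2 hz0
    have hρ1 : ρ < 1 := hz.2.trans hr
    have hqz : ‖q z‖ ≤ C := hq z (by simpa using hz.2.le)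
    have hsplit : Φ z = z⁻¹ + b * (z * ((1 - ε ^ 2 / ρ ^ 2 : ℝ) : ℂ)) + q z * z ^ 2 -
        c * (starRingEnd ℂ) (p z) := by
      have hinv : (starRingEnd ℂ) (z⁻¹) = z * ((1 / ρ ^ 2 : ℝ) : ℂ) := by
        rw [inv_def, normSq_eq_norm_sq, map_mul, conj_conj, conj_ofReal, one_div]
      simp only [hΦ, hH, map_add, hinv, hc]
      rw [hpq z]
      push_cast
      ring
    have hnn : 0 ≤ 1 - ε ^ 2 / ρ ^ 2 := by
      rw [sub_nonneg, div_le_one (by positivity)]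
      exact pow_le_pow_left₀ hε.le hz.1.le 2
    have hpz : ‖p z‖ ≤ B + C := by
      rw [hpq z, norm_mul]
      have : ‖b + z * q z‖ ≤ B + C := (norm_add_le _ _).trans <| by
        rw [norm_mul]
        have : ‖z‖ * ‖q z‖ ≤ 1 * C := by gcongr
        linarith
      calc ‖z‖ * ‖b + z * q z‖ ≤ 1 * (B + C) := by gcongr
        _ = B + C := one_mul _
    rw [mem_closedBall_zero_iff, hsplit]
    calc _ ≤ ‖z⁻¹‖ + ‖b * (z * ((1 - ε ^ 2 / ρ ^ 2 : ℝ) : ℂ))‖ + ‖q z * z ^ 2‖ +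
          ‖c * (starRingEnd ℂ) (p z)‖ := by
          refine (norm_sub_le _ _).trans (add_le_add_left ?_ _)
          exact norm_add₃_le
      _ ≤ ρ⁻¹ + B * (ρ * (1 - ε ^ 2 / ρ ^ 2)) + C * ρ ^ 2 + (B * (B + C)) * ε ^ 2 := by
          rw [norm_inv, norm_mul, norm_mul, norm_mul, norm_mul, norm_real, norm_pow,
            RCLike.norm_conj, Real.norm_of_nonneg hnn, hcn]
          have : B * ε ^ 2 * ‖p z‖ ≤ B * ε ^ 2 * (B + C) := by gcongr
          have : ‖q z‖ * ρ ^ 2 ≤ C * ρ ^ 2 := by gcongr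
          linarith
      _ ≤ R := annulus_bound hB hC hε hz.1 hρ1 hK
  have harea := lintegral_abs_det_fderiv_eq_addHaar_image volume hAo.measurableSet hΦd hΦinj
  have hdet : ∀ z, ENNReal.ofReal |(h' z • (1 : ℂ →L[ℝ] ℂ) +
      (-(c * (starRingEnd ℂ) (h' z))) • (conjCLE : ℂ →L[ℝ] ℂ)).det| =
      ENNReal.ofReal (1 - ‖c‖ ^ 2) * ENNReal.ofReal (‖h' z‖ ^ 2) := fun z ↦ by
    have h1 : 0 ≤ 1 - ‖c‖ ^ 2 := by nlinarith [norm_nonneg c]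
    rw [det_smul_add_conj, norm_neg, norm_mul, RCLike.norm_conj, ← ENNReal.ofReal_mul h1,
      ← abs_of_nonneg (mul_nonneg h1 (sq_nonneg ‖h' z‖))]
    congr 2
    ring
  simp_rw [hdet] at harea
  rw [lintegral_const_mul' _ _ ENNReal.ofReal_ne_top] at harea
  have hdp : DifferentiableOn ℂ (deriv p) (ball 0 1) := hp.deriv isOpen_ball
  have hlow := ofReal_integral_le_lintegral_annulus (u := fun z ↦ ‖h' z‖ ^ 2)
    (φ := fun ρ ↦ (ρ ^ 4)⁻¹ + B ^ 2) hε hεr.le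
    (((hdp.continuousOn.mono hAb).sub (ContinuousOn.inv₀ (by fun_prop)
      fun z hz ↦ pow_ne_zero 2 (hA0 z hz))).norm.pow 2) (fun z ↦ sq_nonneg _)
    ((ContinuousOn.inv₀ (by fun_prop) fun ρ hρ ↦
      pow_ne_zero 4 (hε.trans_le hρ.1).ne').add continuousOn_const) (fun ρ ↦ by positivity)
    (fun ρ hρ ↦ by
      have := le_circleAverage_normSq hdp (hε.trans hρ.1) (hρ.2.trans hr)
      rwa [hb] at this)
  have hFTC : ∫ ρ in ε..r, ρ * ((ρ ^ 4)⁻¹ + B ^ 2) =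
      (-(r ^ 2)⁻¹ / 2 + B ^ 2 * r ^ 2 / 2) - (-(ε ^ 2)⁻¹ / 2 + B ^ 2 * ε ^ 2 / 2) := by
    have hpos : ∀ x ∈ uIcc ε r, x ≠ 0 := fun x hx ↦ by
      rw [uIcc_of_le hεr.le] at hx
      exact (hε.trans_le hx.1).ne'
    refine intervalIntegral.integral_eq_sub_of_hasDerivAt
      (f := fun ρ ↦ -(ρ ^ 2)⁻¹ / 2 + B ^ 2 * ρ ^ 2 / 2) (fun x hx ↦ ?_) ?_
    · have hx0 := hpos x hx
      have h1 := ((((hasDerivAt_pow 2 x).inv (pow_ne_zero 2 hx0)).neg.div_const 2).add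
        (((hasDerivAt_pow 2 x).const_mul (B ^ 2)).div_const 2))
      refine h1.congr_deriv ?_
      field_simp
      ring
    · exact (continuousOn_id.mul ((ContinuousOn.inv₀ (by fun_prop) fun ρ hρ ↦
        pow_ne_zero 4 (hpos ρ hρ)).add continuousOn_const)).intervalIntegrable
  rw [hFTC] at hlow
  have hfin := (mul_le_mul_right hlow (ENNReal.ofReal (1 - ‖c‖ ^ 2))).trans
    (harea.le.trans (measure_mono himage))
  have hvol : volume (closedBall (0 : ℂ) R) = ENNReal.ofReal (R ^ 2 * Real.pi) := by
    rw [Complex.volume_closedBall, ENNReal.ofReal_mul (sq_nonneg R), ENNReal.ofReal_pow hR0,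
      ← NNReal.coe_real_pi, ENNReal.ofReal_coe_nnreal]
  rw [hvol, ← ENNReal.ofReal_mul (by nlinarith [norm_nonneg c]),
    ENNReal.ofReal_le_ofReal_iff (by positivity), hcn] at hfin
  refine le_of_mul_le_mul_right (le_of_eq_of_le ?_ hfin) Real.pi_pos
  ring

/-- The first coefficient estimate of the area theorem: if `1/z + p` is univalent on the punctured
unit disk, then `‖p'(0)‖ ≤ 1`. -/
theorem area_inequality {p : ℂ → ℂ} (hp : DifferentiableOn ℂ p (ball 0 1)) (hp0 : p 0 = 0)
    (hinj : InjOn (fun z ↦ z⁻¹ + p z) (ball 0 1 \ {0})) : ‖deriv p 0‖ ≤ 1 := by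
  have hnhds : ball (0 : ℂ) 1 ∈ nhds 0 := ball_mem_nhds 0 one_pos
  set b := deriv p 0 with hb
  set q := dslope (dslope p 0) 0 with hq
  have hpq : ∀ z, p z = z * (b + z * q z) := fun z ↦ by
    have h1 := sub_smul_dslope p 0 z
    have h2 := sub_smul_dslope (dslope p 0) 0 z
    simp only [sub_zero, smul_eq_mul, hp0, dslope_same] at h1 h2
    rw [h2, ← hb, add_sub_cancel, h1]
  have hqd : DifferentiableOn ℂ q (ball 0 1) := by
    rw [hq, differentiableOn_dslope hnhds, differentiableOn_dslope hnhds]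
    exact hp
  have key : ∀ r ∈ Ioo (0 : ℝ) 1, ‖b‖ ^ 2 * r ^ 2 ≤ (r ^ 2)⁻¹ := by
    rintro r ⟨hr0, hr1⟩
    obtain ⟨C, hC⟩ := (isCompact_closedBall (0 : ℂ) r).exists_bound_of_continuousOn
      (hqd.continuousOn.mono (closedBall_subset_ball hr1))
    have hC0 : 0 ≤ C := (norm_nonneg _).trans (hC 0 (mem_closedBall_self hr0.le))
    set M := C + ‖b‖ * (‖b‖ + C) with hM
    have hlim : Filter.Tendsto (fun ε : ℝ ↦ (1 - (‖b‖ * ε ^ 2) ^ 2) *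
        (-(r ^ 2)⁻¹ + ‖b‖ ^ 2 * (r ^ 2 - ε ^ 2)) - ‖b‖ ^ 2 * ε ^ 2 - 2 * M * ε - M ^ 2 * ε ^ 4)
        (nhdsWithin 0 (Ioi 0)) (nhds (-(r ^ 2)⁻¹ + ‖b‖ ^ 2 * r ^ 2)) := by
      refine Filter.Tendsto.mono_left ?_ nhdsWithin_le_nhds
      refine Continuous.tendsto' (by fun_prop) _ _ ?_
      simp
    have hle := le_of_tendsto (b := 0) hlim ?_
    · linarith
    have h1 : ∀ᶠ ε in nhdsWithin (0 : ℝ) (Ioi 0), (2 * ‖b‖ + 2 * C) * ε < 1 := by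
      refine Filter.Eventually.filter_mono nhdsWithin_le_nhds ?_
      exact (Continuous.tendsto' (by fun_prop) 0 0 (by simp)).eventually_lt_const one_pos
    filter_upwards [h1, Ioo_mem_nhdsGT hr0] with ε hε1 hε
    have := area_inequality_annulus hp hinj rfl hC0 hpq hC hε.1 hε.2 hr1 hε1.le
    have hε0 : ε ≠ 0 := hε.1.ne'
    have e1 : (1 - (‖b‖ * ε ^ 2) ^ 2) * ((ε ^ 2)⁻¹ - (r ^ 2)⁻¹ + ‖b‖ ^ 2 * (r ^ 2 - ε ^ 2)) =
      (ε ^ 2)⁻¹ - ‖b‖ ^ 2 * ε ^ 2 + (1 - (‖b‖ * ε ^ 2) ^ 2) *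
        (-(r ^ 2)⁻¹ + ‖b‖ ^ 2 * (r ^ 2 - ε ^ 2)) := by field_simp; ring
    have e2 : (ε⁻¹ + M * ε ^ 2) ^ 2 = (ε ^ 2)⁻¹ + 2 * M * ε + M ^ 2 * ε ^ 4 := by
      field_simp; ring
    rw [e1, e2] at this
    linarith
  have hlim2 : Filter.Tendsto (fun r : ℝ ↦ ‖b‖ ^ 2 * r ^ 4) (nhdsWithin 1 (Iio 1))
      (nhds (‖b‖ ^ 2)) :=
    (Continuous.tendsto' (by fun_prop) 1 _ (by simp)).mono_left nhdsWithin_le_nhds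
  have hsq : ‖b‖ ^ 2 ≤ 1 := by
    refine le_of_tendsto hlim2 ?_
    filter_upwards [Ioo_mem_nhdsLT one_pos] with r hr
    have h1 := key r hr
    have hr2 : 0 < r ^ 2 := pow_pos hr.1 2
    calc ‖b‖ ^ 2 * r ^ 4 = ‖b‖ ^ 2 * r ^ 2 * r ^ 2 := by ring
      _ ≤ (r ^ 2)⁻¹ * r ^ 2 := by gcongr
      _ = 1 := inv_mul_cancel₀ hr2.ne'
  exact (sq_le_one_iff₀ (norm_nonneg b)).1 hsq

/-- Bieberbach's inequality `‖a₂‖ ≤ 2` for the univalent function `z G(z)`. -/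
theorem bieberbach_second_coeff {G : ℂ → ℂ} (hG : DifferentiableOn ℂ G (ball 0 1))
    (hG0 : G 0 = 1) (hinj : InjOn (fun z ↦ z * G z) (ball 0 1)) : ‖deriv G 0‖ ≤ 2 := by
  have hnhds : ball (0 : ℂ) 1 ∈ nhds 0 := ball_mem_nhds 0 one_pos
  have h0mem : (0 : ℂ) ∈ ball (0 : ℂ) 1 := mem_ball_self one_pos
  have hGne : ∀ z ∈ ball (0 : ℂ) 1, G z ≠ 0 := fun z hz hGz ↦ by
    have : z = 0 := hinj hz h0mem (by simp [hGz])
    simp [this, hG0] at hGz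
  obtain ⟨m, hm, hm0, hmG⟩ := exists_sq_mul_eq_one hG hGne hG0
  have hsq : ∀ z ∈ ball (0 : ℂ) 1, z ^ 2 ∈ ball (0 : ℂ) 1 := fun z hz ↦ by
    simp only [mem_ball_zero_iff, norm_pow] at hz ⊢
    exact pow_lt_one₀ (norm_nonneg z) hz two_ne_zero
  set s := dslope m 0 with hs
  have hsd : DifferentiableOn ℂ s (ball 0 1) := (differentiableOn_dslope hnhds).2 hm
  have hms : ∀ z, z * s z = m z - 1 := fun z ↦ by
    simpa [hm0] using sub_smul_dslope m 0 z
  set p : ℂ → ℂ := fun z ↦ z * s (z ^ 2) with hp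
  have hpd : DifferentiableOn ℂ p (ball 0 1) :=
    differentiableOn_id.mul (hsd.comp (by fun_prop) hsq)
  have hHm : ∀ z : ℂ, z ≠ 0 → z⁻¹ + p z = m (z ^ 2) * z⁻¹ := fun z hz ↦ by
    have := hms (z ^ 2)
    simp only [hp]
    field_simp
    linear_combination this
  have hpinj : InjOn (fun z ↦ z⁻¹ + p z) (ball 0 1 \ {0}) := by
    rintro z ⟨hz, hz0 : z ≠ 0⟩ w ⟨hw, hw0 : w ≠ 0⟩ h
    simp only [hHm z hz0, hHm w hw0] at h
    have hz1 := hmG _ (hsq z hz)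
    have hw1 := hmG _ (hsq w hw)
    have h2 : z ^ 2 * G (z ^ 2) = w ^ 2 * G (w ^ 2) := by
      have e : ∀ x : ℂ, x ≠ 0 → m (x ^ 2) ^ 2 * G (x ^ 2) = 1 →
          x ^ 2 * G (x ^ 2) = ((m (x ^ 2) * x⁻¹) ^ 2)⁻¹ := fun x hx h ↦ by
        have : m (x ^ 2) ≠ 0 := by rintro h'; simp [h'] at h
        field_simp
        linear_combination h
      rw [e z hz0 hz1, e w hw0 hw1, h]
    rcases sq_eq_sq_iff_eq_or_eq_neg.1 (hinj (hsq z hz) (hsq w hw) h2) with h3 | h3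
    · exact h3
    · exfalso
      have hmw : m (w ^ 2) ≠ 0 := by rintro h'; simp [h'] at hw1
      rw [h3, neg_sq] at h
      have : m (w ^ 2) * w⁻¹ ≠ 0 := mul_ne_zero hmw (inv_ne_zero hw0)
      apply this
      rw [inv_neg] at h
      linear_combination -h / 2
  have hpder : deriv p 0 = deriv m 0 := by
    have h1 : DifferentiableAt ℂ (fun z : ℂ ↦ s (z ^ 2)) 0 :=
      (hsd.comp (by fun_prop) hsq : DifferentiableOn ℂ (fun z : ℂ ↦ s (z ^ 2)) _).differentiableAt
        hnhds
    have h2 := (hasDerivAt_id (0 : ℂ)).mul h1.hasDerivAt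
    rw [show p = id * fun z : ℂ ↦ s (z ^ 2) from rfl, h2.deriv]
    simp [hs]
  have hle := area_inequality hpd (by simp [hp]) hpinj
  rw [hpder] at hle
  have hGm : 2 * deriv m 0 + deriv G 0 = 0 := by
    have h1 := ((hm.differentiableAt hnhds).hasDerivAt.pow 2).mul
      (hG.differentiableAt hnhds).hasDerivAt
    have h2 : HasDerivAt (m ^ 2 * G) 0 0 :=
      (hasDerivAt_const (0 : ℂ) (1 : ℂ)).congr_of_eventuallyEq
        (Filter.eventually_of_mem hnhds hmG)
    have := h1.unique h2
    simpa [hm0, hG0] using this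
  rw [show deriv G 0 = -(2 * deriv m 0) by linear_combination hGm, norm_neg, norm_mul]
  norm_num
  linarith

/-- Koebe one-quarter theorem: `f(𝔻)` contains the disk of radius `1/4`. -/
theorem koebe_quarter (f : ℂ → ℂ) (hf : SClass f) :
    Metric.ball (0:ℂ) (1/4) ⊆ f '' Metric.ball (0:ℂ) 1 := by
  obtain ⟨hd, hinj, hf0, hf1⟩ := hf
  intro w hw
  by_contra hmem
  have hnhds : ball (0 : ℂ) 1 ∈ nhds 0 := ball_mem_nhds 0 one_pos
  have hw0 : w ≠ 0 := by
    rintro rfl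
    exact hmem ⟨0, mem_ball_self one_pos, hf0⟩
  set G := dslope f 0 with hG
  have hGd : DifferentiableOn ℂ G (ball 0 1) := (differentiableOn_dslope hnhds).2 hd
  have hG0 : G 0 = 1 := by rw [hG, dslope_same, hf1]
  have hfG : ∀ z, z * G z = f z := fun z ↦ by simpa [hf0] using sub_smul_dslope f 0 z
  have hne : ∀ z ∈ ball (0 : ℂ) 1, w - z * G z ≠ 0 := fun z hz h ↦
    hmem ⟨z, hz, by rw [← hfG]; exact (sub_eq_zero.1 h).symm⟩
  have h1 : ‖deriv G 0‖ ≤ 2 :=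
    bieberbach_second_coeff hGd hG0 (hinj.congr fun z _ ↦ (hfG z).symm)
  set G₂ : ℂ → ℂ := fun z ↦ w * G z / (w - z * G z) with hG₂
  have hden : DifferentiableOn ℂ (fun z ↦ w - z * G z) (ball 0 1) :=
    (differentiableOn_const w).sub (differentiableOn_id.mul hGd)
  have h2 : ‖deriv G₂ 0‖ ≤ 2 := by
    refine bieberbach_second_coeff ((hGd.const_mul w).div hden hne) (by simp [hG₂, hG0, hw0]) ?_
    intro z hz y hy h
    refine hinj hz hy ?_
    have hz1 := hne z hz
    have hy1 := hne y hy
    simp only [hG₂] at h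
    rw [← hfG, ← hfG]
    field_simp at h
    refine mul_left_cancel₀ hw0 ?_
    linear_combination h
  have hder : deriv G₂ 0 = deriv G 0 + w⁻¹ := by
    have hg := (hGd.differentiableAt hnhds).hasDerivAt
    have := (hg.const_mul w).div (((hasDerivAt_id (0 : ℂ)).mul hg).const_sub w)
      (by simpa using hw0)
    refine this.deriv.trans ?_
    simp [hG0]
    field_simp
  have h3 : ‖w⁻¹‖ ≤ 4 := by
    have : w⁻¹ = deriv G₂ 0 - deriv G 0 := by rw [hder]; ring
    rw [this]
    exact (norm_sub_le _ _).trans (by linarith)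
  have hwpos : 0 < ‖w‖ := norm_pos_iff.2 hw0
  rw [norm_inv, inv_le_comm₀ hwpos four_pos] at h3
  rw [mem_ball_zero_iff] at hw
  linarith
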